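/- (Minkowski's inequality, Blaschke's proof via the stutzfunction.) Let H : ℝ³∖{0} → ℝ be smooth and homogeneous of degree 0, write H(θ,φ) := H(ℓ(θ,φ)), and define M := ∫₀^{2π} ∫₀^{π} H sinθ dθ dφ and A := ∫₀^{2π} ∫₀^{π} (H² − (1/2)((∂_θ H)² + (1/sin²θ)(∂_φ H)²)) sinθ dθ dφ. Then M² ≥ 4πA, with equality if and only if there exist c ∈ ℝ and a ∈ ℝ³ such that H(θ,φ) = c + a·ℓ(θ,φ) for all θ ∈ (0,π), φ (i.e. H is constant plus a combination of first spherical harmonics, corresponding to a round sphere with translated origin). -/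

import Mathlib

noncomputable section

/-- The unit radial vector `ℓ(θ,φ) = (sinθ cosφ, sinθ sinφ, cosθ)` in `ℝ³`. -/
def sphL (θ φ : ℝ) : Fin 3 → ℝ :=
  ![Real.sin θ * Real.cos φ, Real.sin θ * Real.sin φ, Real.cos θ]

/-- The stutzfunction as a function of the spherical coordinates: `H(θ,φ) = H(ℓ(θ,φ))`. -/
def Hsph (H : (Fin 3 → ℝ) → ℝ) (θ φ : ℝ) : ℝ := H (sphL θ φ)

open Set Filter Topology MeasureTheory

theorem auxL {a b : ℝ} (hab : a < b) (g g' q : ℝ → ℝ) (hg : ContinuousOn g (Icc a b))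
    (hd : ∀ x ∈ Ioo a b, HasDerivAt g (g' x) x) (hq : Continuous q)
    (hle : ∀ x ∈ Ioo a b, g' x ≤ q x) :
    g b - g a ≤ ∫ x in a..b, q x ∧
      ((∫ x in a..b, q x) = g b - g a → ∀ x ∈ Ioo a b, q x = g' x) := by
  have key : ∀ c d, a ≤ c → c ≤ d → d ≤ b → g d - g c ≤ ∫ x in c..d, q x := by
    intro c d hc hcd hdb
    refine intervalIntegral.sub_le_integral_of_hasDeriv_right_of_le hcd
      (hg.mono (Icc_subset_Icc hc hdb)) (g' := g') ?_ ?_ ?_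
    · intro x hx
      exact (hd x ⟨hc.trans_lt hx.1, hx.2.trans_le hdb⟩).hasDerivWithinAt
    · exact hq.integrableOn_Icc
    · intro x hx
      exact hle x ⟨hc.trans_lt hx.1, hx.2.trans_le hdb⟩
  refine ⟨key a b le_rfl hab.le le_rfl, fun heq x hx => ?_⟩
  have h1 : ∀ y ∈ Ioo a b, g y = g a + ∫ x in a..y, q x := by
    intro y hy
    have e1 := key a y le_rfl hy.1.le hy.2.le
    have e2 := key y b hy.1.le hy.2.le le_rfl
    have e3 : (∫ x in a..y, q x) + (∫ x in y..b, q x) = ∫ x in a..b, q x :=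
      intervalIntegral.integral_add_adjacent_intervals (hq.intervalIntegrable _ _)
        (hq.intervalIntegrable _ _)
    linarith
  have h2 : HasDerivAt (fun y => g a + ∫ x in a..y, q x) (q x) x :=
    (intervalIntegral.integral_hasDerivAt_right (hq.intervalIntegrable _ _)
      (hq.stronglyMeasurableAtFilter _ _) hq.continuousAt).const_add _
  have h3 : g =ᶠ[𝓝 x] (fun y => g a + ∫ x in a..y, q x) := by
    filter_upwards [Ioo_mem_nhds hx.1 hx.2] with y hy using h1 y hy
  exact (h2.congr_of_eventuallyEq h3).unique (hd x hx)

/-- quotient by sine at a zero -/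
theorem auxQ {f : ℝ → ℝ} {a f' : ℝ} (hf : HasDerivAt f f' a) (h0 : f a = 0)
    (hs : Real.sin a = 0) : Tendsto (fun x => f x / Real.sin x) (𝓝[≠] a) (𝓝 (f' / Real.cos a)) := by
  have hc : Real.cos a ≠ 0 := by
    intro h
    have := Real.sin_sq_add_cos_sq a
    rw [hs, h] at this; norm_num at this
  have h1 := hf.tendsto_slope
  have h2 := (Real.hasDerivAt_sin a).tendsto_slope
  refine (h1.div h2 hc).congr' ?_
  filter_upwards [self_mem_nhdsWithin] with x hx
  have hx' : x - a ≠ 0 := sub_ne_zero.2 hx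
  simp only [Pi.div_apply, slope_def_field, h0, hs, sub_zero]
  rw [div_div_div_cancel_right₀ hx']

theorem auxQ1 {f : ℝ → ℝ} {a f' : ℝ} (hf : HasDerivAt f f' a) (h0 : f a = 0)
    (hs : Real.sin a = 0) : ContinuousAt (fun x => f x ^ 2 / Real.sin x) a := by
  rw [continuousAt_iff_punctured_nhds]
  have h1 := (hf.continuousAt.tendsto.mono_left (nhdsWithin_le_nhds (s := {a}ᶜ))).mul
    (auxQ hf h0 hs)
  simp only [h0, hs, zero_mul] at h1 ⊢
  refine (h1.congr fun x => ?_).trans (by simp)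
  ring

theorem auxQ2 {f : ℝ → ℝ} {a : ℝ} (hf : HasDerivAt f 0 a) (h0 : f a = 0)
    (hs : Real.sin a = 0) : ContinuousAt (fun x => f x ^ 2 / Real.sin x ^ 2) a := by
  rw [continuousAt_iff_punctured_nhds]
  have h1 := (auxQ hf h0 hs).pow 2
  simp only [h0, hs, zero_div] at h1 ⊢
  refine (h1.congr fun x => ?_).trans (by simp)
  rw [div_pow]

theorem auxConst {f : ℝ → ℝ} {a b : ℝ} (hf : ∀ x ∈ Ioo a b, HasDerivAt f 0 x) :
    ∀ x ∈ Ioo a b, ∀ y ∈ Ioo a b, f x = f y := by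
  intro x hx y hy
  exact isOpen_Ioo.is_const_of_deriv_eq_zero isPreconnected_Ioo
    (fun z hz => (hf z hz).differentiableAt.differentiableWithinAt)
    (fun z hz => (hf z hz).deriv) hx hy

/-- Wirtinger on an arc of length π -/
theorem auxWh0 (f f' : ℝ → ℝ) (hf : ∀ x, HasDerivAt f (f' x) x) (hf' : Continuous f')
    (h0 : f 0 = 0) (h1 : f Real.pi = 0) :
    0 ≤ (∫ x in (0:ℝ)..Real.pi, (f' x ^ 2 - f x ^ 2)) ∧
    ((∫ x in (0:ℝ)..Real.pi, (f' x ^ 2 - f x ^ 2)) = 0 →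
      ∃ k, ∀ x ∈ Icc 0 Real.pi, f x = k * Real.sin x) := by
  have hfc : Continuous f := continuous_iff_continuousAt.2 fun x => (hf x).continuousAt
  have hs : ∀ x ∈ Ioo 0 Real.pi, Real.sin x ≠ 0 := fun x hx => (Real.sin_pos_of_mem_Ioo hx).ne'
  have hid : ∀ x ∈ Ioo 0 Real.pi, (f' x ^ 2 - f x ^ 2) - (-Real.sin x * (f x ^ 2 / Real.sin x) + Real.cos x *
      ((2 * f x * f' x * Real.sin x - f x ^ 2 * Real.cos x) / Real.sin x ^ 2)) =
      (f' x - Real.cos x * f x / Real.sin x) ^ 2 := by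
    intro x hx
    have := hs x hx
    field_simp
    ring
  have L := auxL Real.pi_pos (fun x => Real.cos x * (f x ^ 2 / Real.sin x))
    (fun x => -Real.sin x * (f x ^ 2 / Real.sin x) + Real.cos x *
      ((2 * f x * f' x * Real.sin x - f x ^ 2 * Real.cos x) / Real.sin x ^ 2))
    (fun x => f' x ^ 2 - f x ^ 2) ?_ ?_ (by fun_prop) ?_
  · simp only [h0, h1] at L
    norm_num at L
    refine ⟨L.1, fun h => ?_⟩
    have hE := L.2 h
    have hE2 : ∀ x ∈ Ioo 0 Real.pi, f' x - Real.cos x * f x / Real.sin x = 0 := by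
      intro x hx
      have e1 := hE x hx.1 hx.2
      have e2 := hid x hx
      have : (f' x - Real.cos x * f x / Real.sin x) ^ 2 = 0 := by rw [← e2, e1]; ring
      exact pow_eq_zero_iff (two_ne_zero) |>.1 this
    have hC := auxConst (f := fun x => f x / Real.sin x) (a := 0) (b := Real.pi) (by
      intro x hx
      have h := (hf x).div (Real.hasDerivAt_sin x) (hs x hx)
      refine h.congr_deriv ?_
      have e := hE2 x hx
      have := hs x hx
      field_simp at e ⊢
      linarith)
    have hp2 : Real.pi / 2 ∈ Ioo 0 Real.pi := ⟨by positivity, by linarith [Real.pi_pos]⟩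
    refine ⟨f (Real.pi/2), fun x hx => ?_⟩
    rcases eq_or_lt_of_le hx.1 with h | h
    · rw [← h]; simp [h0]
    rcases eq_or_lt_of_le hx.2 with h' | h'
    · rw [h']; simp [h1]
    have e := hC x ⟨h, h'⟩ _ hp2
    have := hs x ⟨h, h'⟩
    simp only [Real.sin_pi_div_two, div_one] at e
    rw [← e]; field_simp
  · intro x hx
    apply ContinuousAt.continuousWithinAt
    refine Real.continuous_cos.continuousAt.mul ?_
    rcases eq_or_lt_of_le hx.1 with h | h
    · rw [← h]; exact auxQ1 (hf 0) h0 (by simp)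
    rcases eq_or_lt_of_le hx.2 with h' | h'
    · rw [h']; exact auxQ1 (hf _) h1 (by simp)
    · exact (hfc.continuousAt.pow 2).div Real.continuous_sin.continuousAt (hs x ⟨h,h'⟩)
  · intro x hx
    have h := (Real.hasDerivAt_cos x).mul ((((hf x).pow 2)).div (Real.hasDerivAt_sin x) (hs x hx))
    refine h.congr_deriv ?_
    simp
  · intro x hx
    have := hid x hx
    nlinarith [sq_nonneg (f' x - Real.cos x * f x / Real.sin x)]

theorem auxD (f f' : ℝ → ℝ → ℝ) (a b : ℝ) (hf : ∀ x, Continuous (f x))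
    (hf' : Continuous (Function.uncurry f'))
    (hd : ∀ x t, HasDerivAt (fun x => f x t) (f' x t) x) (x : ℝ) :
    HasDerivAt (fun x => ∫ t in a..b, f x t) (∫ t in a..b, f' x t) x := by
  obtain ⟨C, hC⟩ := ((isCompact_closedBall x 1).prod (isCompact_uIcc (a := a) (b := b))).exists_bound_of_continuousOn
    hf'.continuousOn
  refine (intervalIntegral.hasDerivAt_integral_of_dominated_loc_of_deriv_le (bound := fun _ => C)
    (Metric.closedBall_mem_nhds x one_pos) ?_ ?_ ?_ ?_ ?_ ?_).2
  · exact Eventually.of_forall fun y => (hf y).aestronglyMeasurable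
  · exact (hf x).intervalIntegrable _ _
  · have : Continuous (f' x) := by fun_prop
    exact this.aestronglyMeasurable
  · refine Eventually.of_forall fun t ht y hy => ?_
    exact hC (y, t) ⟨hy, uIoc_subset_uIcc ht⟩
  · simp
  · exact Eventually.of_forall fun t ht y hy => hd y t

theorem auxCS (u : ℝ → ℝ) (hu : Continuous u) :
    (∫ x in (0:ℝ)..(2 * Real.pi), u x) ^ 2 / (2 * Real.pi) ≤ (∫ x in (0:ℝ)..(2 * Real.pi), u x ^ 2) ∧
    ((∫ x in (0:ℝ)..(2 * Real.pi), u x ^ 2) = (∫ x in (0:ℝ)..(2 * Real.pi), u x) ^ 2 / (2 * Real.pi) →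
      ∀ x ∈ Icc 0 (2 * Real.pi), u x = (∫ x in (0:ℝ)..(2 * Real.pi), u x) / (2 * Real.pi)) := by
  set I := ∫ x in (0:ℝ)..(2 * Real.pi), u x with hI
  have hp := Real.pi_pos
  have e : (∫ x in (0:ℝ)..(2 * Real.pi), (u x - I / (2 * Real.pi)) ^ 2) =
      (∫ x in (0:ℝ)..(2 * Real.pi), u x ^ 2) - I ^ 2 / (2 * Real.pi) := by
    have : ∀ x, (u x - I / (2 * Real.pi)) ^ 2 = u x ^ 2 - (I / Real.pi) * u x + (I / (2 * Real.pi)) ^ 2 := by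
      intro x; field_simp; ring
    simp_rw [this]
    rw [intervalIntegral.integral_add, intervalIntegral.integral_sub,
      intervalIntegral.integral_const_mul, ← hI, intervalIntegral.integral_const]
    · simp only [smul_eq_mul]; field_simp; ring
    all_goals apply Continuous.intervalIntegrable; fun_prop
  have e2 : 0 ≤ ∫ x in (0:ℝ)..(2 * Real.pi), (u x - I / (2 * Real.pi)) ^ 2 :=
    intervalIntegral.integral_nonneg (by positivity) fun x _ => sq_nonneg _
  refine ⟨by linarith, fun h x hx => ?_⟩
  by_contra hne
  have : 0 < ∫ x in (0:ℝ)..(2 * Real.pi), (u x - I / (2 * Real.pi)) ^ 2 := by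
    refine intervalIntegral.integral_pos (by positivity) (by fun_prop) (fun x _ => sq_nonneg _)
      ⟨x, hx, ?_⟩
    have := sub_ne_zero.2 hne
    positivity
  linarith

theorem auxSwap (f : ℝ → ℝ → ℝ) (hf : Continuous (Function.uncurry f)) (a b c d : ℝ) :
    (∫ x in a..b, ∫ y in c..d, f x y) = ∫ y in c..d, ∫ x in a..b, f x y := by
  apply MeasureTheory.intervalIntegral_intervalIntegral_swap
  exact (hf.continuousOn.integrableOn_compact
    ((isCompact_uIcc (a := a) (b := b)).prod (isCompact_uIcc (a := c) (b := d)))).mono_set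
    (Set.prod_mono uIoc_subset_uIcc uIoc_subset_uIcc)

/-- the Wirtinger inequality -/
theorem auxW (f f' : ℝ → ℝ) (hf : ∀ x, HasDerivAt f (f' x) x) (hf' : Continuous f')
    (hper : Function.Periodic f (2 * Real.pi)) :
    (∫ x in (0:ℝ)..(2 * Real.pi), f x ^ 2) - (∫ x in (0:ℝ)..(2 * Real.pi), f x) ^ 2 / (2 * Real.pi)
      ≤ (∫ x in (0:ℝ)..(2 * Real.pi), f' x ^ 2) ∧
    ((∫ x in (0:ℝ)..(2 * Real.pi), f' x ^ 2) = (∫ x in (0:ℝ)..(2 * Real.pi), f x ^ 2) -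
        (∫ x in (0:ℝ)..(2 * Real.pi), f x) ^ 2 / (2 * Real.pi) →
      ∃ α β : ℝ, ∀ x, f x = (∫ x in (0:ℝ)..(2 * Real.pi), f x) / (2 * Real.pi) +
        α * Real.cos x + β * Real.sin x) := by
  have hp := Real.pi_pos
  have hfc : Continuous f := continuous_iff_continuousAt.2 fun x => (hf x).continuousAt
  have hper' : Function.Periodic f' (2 * Real.pi) := by
    intro x
    have h1 : HasDerivAt (fun y => f (y + 2 * Real.pi)) (f' (x + 2 * Real.pi)) x :=
      (hf (x + 2 * Real.pi)).comp_add_const x _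
    have h2 : (fun y => f (y + 2 * Real.pi)) = f := funext hper
    rw [h2] at h1
    exact h1.unique (hf x)
  set I := ∫ x in (0:ℝ)..(2 * Real.pi), f x with hI
  obtain ⟨p, hpm, hp0⟩ : ∃ p : ℝ, p ∈ Icc 0 Real.pi ∧ f (p + Real.pi) - f p = 0 := by
    have hc : Continuous fun x => f (x + Real.pi) - f x := by fun_prop
    have e : f (Real.pi + Real.pi) = f 0 := by
      rw [← hper 0]; congr 1; ring
    rcases le_total (f (0 + Real.pi) - f 0) 0 with h | h
    · have := intermediate_value_Icc hp.le hc.continuousOn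
      obtain ⟨p, h1, h2⟩ := this ⟨h, by simp only [e, zero_add] at h ⊢; linarith⟩
      exact ⟨p, h1, h2⟩
    · have := intermediate_value_Icc' hp.le hc.continuousOn
      obtain ⟨p, h1, h2⟩ := this ⟨by simp only [e, zero_add] at h ⊢; linarith, h⟩
      exact ⟨p, h1, h2⟩
  set c := f p with hc
  have hh : ∀ x, HasDerivAt (fun x => f (x + p) - c) (f' (x + p)) x := fun x =>
    ((hf (x + p)).comp_add_const x p).sub_const c
  have hh2 : ∀ x, HasDerivAt (fun x => f (x + Real.pi + p) - c) (f' (x + Real.pi + p)) x := by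
    intro x
    have := (hh (x + Real.pi)).comp_add_const x Real.pi
    exact this
  have epi : f (Real.pi + p) = c := by rw [add_comm]; linarith
  have e2pi : f (Real.pi + Real.pi + p) = c := by
    rw [show Real.pi + Real.pi + p = p + 2 * Real.pi by ring, hper]
  have W1 := auxWh0 (fun x => f (x + p) - c) (fun x => f' (x + p)) hh (by fun_prop)
    (by simp [hc]) (by simp [epi])
  have W2 := auxWh0 (fun x => f (x + Real.pi + p) - c) (fun x => f' (x + Real.pi + p)) hh2
    (by fun_prop) (by simp [epi]) (by simp [e2pi])
  have hsum : (∫ x in (0:ℝ)..Real.pi, (f' (x + p) ^ 2 - (f (x + p) - c) ^ 2)) +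
      (∫ x in (0:ℝ)..Real.pi, (f' (x + Real.pi + p) ^ 2 - (f (x + Real.pi + p) - c) ^ 2)) =
      (∫ x in (0:ℝ)..(2 * Real.pi), f' x ^ 2) - (∫ x in (0:ℝ)..(2 * Real.pi), f x ^ 2) +
        I ^ 2 / (2 * Real.pi) - 2 * Real.pi * (c - I / (2 * Real.pi)) ^ 2 := by
    set u : ℝ → ℝ := fun x => f' x ^ 2 - (f x - c) ^ 2 with hu
    have huc : Continuous u := by fun_prop
    have hup : Function.Periodic u (2 * Real.pi) := by
      intro x; simp only [hu, hper x, hper' x]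
    have a1 : (∫ x in (0:ℝ)..Real.pi, (f' (x + p) ^ 2 - (f (x + p) - c) ^ 2)) =
        ∫ x in (0 + p)..(Real.pi + p), u x :=
      intervalIntegral.integral_comp_add_right (fun x => u x) p
    have a2 : (∫ x in (0:ℝ)..Real.pi, (f' (x + Real.pi + p) ^ 2 - (f (x + Real.pi + p) - c) ^ 2)) =
        ∫ x in (0 + (Real.pi + p))..(Real.pi + (Real.pi + p)), u x := by
      rw [← intervalIntegral.integral_comp_add_right (fun x => u x) (Real.pi + p)]
      simp only [hu, add_assoc]
    rw [a1, a2, zero_add, zero_add, intervalIntegral.integral_add_adjacent_intervals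
      (huc.intervalIntegrable _ _) (huc.intervalIntegrable _ _)]
    rw [show Real.pi + (Real.pi + p) = p + 2 * Real.pi by ring,
      hup.intervalIntegral_add_eq p 0, zero_add]
    have : ∀ x, u x = f' x ^ 2 - f x ^ 2 + 2 * c * f x - c ^ 2 := by
      intro x; simp only [hu]; ring
    simp_rw [this]
    rw [intervalIntegral.integral_sub, intervalIntegral.integral_add, intervalIntegral.integral_sub,
      intervalIntegral.integral_const_mul, ← hI, intervalIntegral.integral_const]
    · simp only [smul_eq_mul]; field_simp; ring
    all_goals apply Continuous.intervalIntegrable; fun_prop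
  have hnn : 0 ≤ 2 * Real.pi * (c - I / (2 * Real.pi)) ^ 2 := by positivity
  refine ⟨by linarith [W1.1, W2.1], fun heq => ?_⟩
  have z1 := W1.2 (by linarith [W1.1, W2.1])
  have z2 := W2.2 (by linarith [W1.1, W2.1])
  have z3 : 2 * Real.pi * (c - I / (2 * Real.pi)) ^ 2 = 0 := by linarith [W1.1, W2.1]
  have hcI : c = I / (2 * Real.pi) := by
    have : (c - I / (2 * Real.pi)) ^ 2 = 0 := by
      rcases mul_eq_zero.1 z3 with h | h
      · exact absurd h (by positivity)
      · exact h
    have := pow_eq_zero_iff (two_ne_zero) |>.1 this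
    linarith
  obtain ⟨k1, hk1⟩ := z1
  obtain ⟨k2, hk2⟩ := z2
  have d1 : f' (Real.pi + p) = k1 * Real.cos Real.pi := by
    have h1 : HasDerivWithinAt (fun x => f (x + p) - c) (f' (Real.pi + p)) (Icc 0 Real.pi) Real.pi :=
      (hh _).hasDerivWithinAt
    have h2 : HasDerivWithinAt (fun x => k1 * Real.sin x) (k1 * Real.cos Real.pi) (Icc 0 Real.pi) Real.pi :=
      ((Real.hasDerivAt_sin _).const_mul k1).hasDerivWithinAt
    have h3 := h2.congr hk1 (hk1 _ ⟨hp.le, le_rfl⟩)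
    exact ((uniqueDiffOn_Icc hp) _ ⟨hp.le, le_rfl⟩).eq_deriv _ h1 h3
  have d2 : f' (0 + Real.pi + p) = k2 * Real.cos 0 := by
    have h1 : HasDerivWithinAt (fun x => f (x + Real.pi + p) - c) (f' (0 + Real.pi + p)) (Icc 0 Real.pi) 0 :=
      (hh2 _).hasDerivWithinAt
    have h2 : HasDerivWithinAt (fun x => k2 * Real.sin x) (k2 * Real.cos 0) (Icc 0 Real.pi) 0 :=
      ((Real.hasDerivAt_sin _).const_mul k2).hasDerivWithinAt
    have h3 := h2.congr hk2 (hk2 _ ⟨le_rfl, hp.le⟩)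
    exact ((uniqueDiffOn_Icc hp) _ ⟨le_rfl, hp.le⟩).eq_deriv _ h1 h3
  have hk : k2 = -k1 := by
    rw [zero_add, d1] at d2
    simp at d2
    linarith
  have hall : ∀ x, f (x + p) - c = k1 * Real.sin x := by
    have hP : Function.Periodic (fun x => f (x + p) - c - k1 * Real.sin x) (2 * Real.pi) := by
      intro x
      simp only [Real.sin_add_two_pi]
      rw [show x + 2 * Real.pi + p = x + p + 2 * Real.pi by ring, hper]
    intro x
    obtain ⟨y, hy, hxy⟩ := hP.exists_mem_Ico₀ (by positivity) x
    suffices f (y + p) - c - k1 * Real.sin y = 0 by linarith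
    rcases le_total y Real.pi with h | h
    · have := hk1 y ⟨hy.1, h⟩
      linarith
    · have := hk2 (y - Real.pi) ⟨by linarith, by linarith [hy.2]⟩
      simp only [sub_add_cancel, Real.sin_sub_pi, hk] at this
      linarith
  refine ⟨-k1 * Real.sin p, k1 * Real.cos p, fun x => ?_⟩
  have := hall (x - p)
  rw [sub_add_cancel, Real.sin_sub] at this
  rw [← hcI]; linarith

theorem auxT (G Gt K : ℝ → ℝ → ℝ) (hG : Continuous (Function.uncurry G))
    (hGt : Continuous (Function.uncurry Gt)) (hK : Continuous (Function.uncurry K))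
    (hdt : ∀ x t, HasDerivAt (fun x => G x t) (Gt x t) x)
    (hdp : ∀ x t, HasDerivAt (fun t => G x t) (Real.sin x * K x t) t)
    (hper : ∀ x, Function.Periodic (G x) (2 * Real.pi))
    (hN : ∀ t, G 0 t = G 0 0) (hS : ∀ t, G Real.pi t = G Real.pi 0)
    (hmean : (∫ x in (0:ℝ)..Real.pi, (∫ t in (0:ℝ)..(2 * Real.pi), G x t) * Real.sin x) = 0) :
    0 ≤ (∫ x in (0:ℝ)..Real.pi, (∫ t in (0:ℝ)..(2 * Real.pi),
      (Gt x t ^ 2 + K x t ^ 2 - 2 * G x t ^ 2)) * Real.sin x) ∧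
    ((∫ x in (0:ℝ)..Real.pi, (∫ t in (0:ℝ)..(2 * Real.pi),
      (Gt x t ^ 2 + K x t ^ 2 - 2 * G x t ^ 2)) * Real.sin x) = 0 →
      ∃ α β γ : ℝ, ∀ x ∈ Ioo 0 Real.pi, ∀ t, G x t =
        α * (Real.sin x * Real.cos t) + β * (Real.sin x * Real.sin t) + γ * Real.cos x) := by
  have hp := Real.pi_pos
  have hs : ∀ x ∈ Ioo 0 Real.pi, 0 < Real.sin x := fun x hx => Real.sin_pos_of_mem_Ioo hx
  have cG : ∀ x, Continuous (G x) := fun x => by fun_prop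
  have cGt : ∀ x, Continuous (Gt x) := fun x => by fun_prop
  have cK : ∀ x, Continuous (K x) := fun x => by fun_prop
  set S : ℝ → ℝ := fun x => ∫ t in (0:ℝ)..(2 * Real.pi), G x t with hSd
  set S' : ℝ → ℝ := fun x => ∫ t in (0:ℝ)..(2 * Real.pi), Gt x t with hS'd
  set N : ℝ → ℝ := fun x => ∫ t in (0:ℝ)..(2 * Real.pi), G x t ^ 2 with hNd
  set P : ℝ → ℝ := fun x => ∫ t in (0:ℝ)..(2 * Real.pi), G x t * Gt x t with hPd
  set T : ℝ → ℝ := fun x => ∫ t in (0:ℝ)..(2 * Real.pi), Gt x t ^ 2 with hTd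
  set KK : ℝ → ℝ := fun x => ∫ t in (0:ℝ)..(2 * Real.pi), K x t ^ 2 with hKKd
  set F : ℝ → ℝ := fun x => ∫ y in (0:ℝ)..x, S y * Real.sin y with hFd
  have dS : ∀ x, HasDerivAt S (S' x) x := auxD G Gt 0 (2 * Real.pi) cG hGt hdt
  have dN : ∀ x, HasDerivAt N (2 * P x) x := by
    intro x
    have := auxD (fun x t => G x t ^ 2) (fun x t => 2 * (G x t * Gt x t)) 0 (2 * Real.pi)
      (fun x => (cG x).pow 2) (by fun_prop) (fun x t => by
        refine ((hdt x t).pow 2).congr_deriv ?_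
        simp; ring) x
    refine this.congr_deriv ?_
    rw [intervalIntegral.integral_const_mul]
  have cS : Continuous S := continuous_iff_continuousAt.2 fun x => (dS x).continuousAt
  have cN : Continuous N := continuous_iff_continuousAt.2 fun x => (dN x).continuousAt
  have cSs : Continuous fun y => S y * Real.sin y := by fun_prop
  have dF : ∀ x, HasDerivAt F (S x * Real.sin x) x := fun x =>
    intervalIntegral.integral_hasDerivAt_right (cSs.intervalIntegrable _ _)
      (cSs.stronglyMeasurableAtFilter _ _) cSs.continuousAt
  have cF : Continuous F := continuous_iff_continuousAt.2 fun x => (dF x).continuousAt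
  have F0 : F 0 = 0 := by simp [hFd]
  have Fpi : F Real.pi = 0 := hmean
  have hsplit : ∀ x, (∫ t in (0:ℝ)..(2 * Real.pi), (Gt x t ^ 2 + K x t ^ 2 - 2 * G x t ^ 2)) =
      T x + KK x - 2 * N x := by
    intro x
    have h1 := cG x
    have h2 := cGt x
    have h3 := cK x
    rw [intervalIntegral.integral_sub, intervalIntegral.integral_add,
      intervalIntegral.integral_const_mul]
    all_goals apply Continuous.intervalIntegrable; fun_prop
  have cq : Continuous fun x => (∫ t in (0:ℝ)..(2 * Real.pi),
      (Gt x t ^ 2 + K x t ^ 2 - 2 * G x t ^ 2)) * Real.sin x := by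
    refine Continuous.mul ?_ Real.continuous_sin
    apply intervalIntegral.continuous_parametric_intervalIntegral_of_continuous'
    fun_prop
  simp_rw [hsplit] at cq ⊢
  -- constancy at poles
  have pole : ∀ x, (∀ t, G x t = G x 0) → N x - S x ^ 2 / (2 * Real.pi) = 0 := by
    intro x hx
    simp only [hNd, hSd, hx, intervalIntegral.integral_const, smul_eq_mul]
    field_simp
    ring
  -- Wirtinger
  have hW : ∀ x, _ := fun x => auxW (G x) (fun t => Real.sin x * K x t) (hdp x)
    (by have := cK x; fun_prop) (hper x)
  have hW1 : ∀ x, N x - S x ^ 2 / (2 * Real.pi) ≤ Real.sin x ^ 2 * KK x := by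
    intro x
    have := (hW x).1
    simp only [mul_pow] at this
    rwa [intervalIntegral.integral_const_mul] at this
  -- Cauchy-Schwarz
  have hu1 : ∀ x, (∫ t in (0:ℝ)..(2 * Real.pi), (Gt x t - Real.cos x / Real.sin x * G x t)) =
      S' x - Real.cos x / Real.sin x * S x := by
    intro x
    have h1 := cG x
    have h2 := cGt x
    rw [intervalIntegral.integral_sub, intervalIntegral.integral_const_mul]
    all_goals apply Continuous.intervalIntegrable; fun_prop
  have hu2 : ∀ x, (∫ t in (0:ℝ)..(2 * Real.pi), (Gt x t - Real.cos x / Real.sin x * G x t) ^ 2) =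
      T x - 2 * (Real.cos x / Real.sin x) * P x + (Real.cos x / Real.sin x) ^ 2 * N x := by
    intro x
    have h1 := cG x
    have h2 := cGt x
    have : ∀ t, (Gt x t - Real.cos x / Real.sin x * G x t) ^ 2 = Gt x t ^ 2 -
      2 * (Real.cos x / Real.sin x) * (G x t * Gt x t) + (Real.cos x / Real.sin x) ^ 2 * G x t ^ 2 := by
      intro t; ring
    simp_rw [this]
    rw [intervalIntegral.integral_add, intervalIntegral.integral_sub,
      intervalIntegral.integral_const_mul, intervalIntegral.integral_const_mul]
    all_goals apply Continuous.intervalIntegrable; fun_prop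
  have hC : ∀ x, _ := fun x => auxCS (fun t => Gt x t - Real.cos x / Real.sin x * G x t)
    (by have h1 := cG x; have h2 := cGt x; fun_prop)
  simp only [hu1, hu2] at hC
  -- the main identity
  have hid : ∀ x ∈ Ioo 0 Real.pi, (T x + KK x - 2 * N x) * Real.sin x -
      ((-Real.sin x * (N x - S x ^ 2 / (2 * Real.pi)) + Real.cos x * (2 * P x - S x * S' x / Real.pi)) -
        1 / (2 * Real.pi) * (4 * (S' x * F x + S x * (S x * Real.sin x)) -
          4 * (-Real.sin x * (F x ^ 2 / Real.sin x ^ 2) + Real.cos x *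
            ((2 * F x * (S x * Real.sin x) * Real.sin x ^ 2 -
              F x ^ 2 * (2 * Real.sin x * Real.cos x)) / (Real.sin x ^ 2) ^ 2)))) =
      (Real.sin x ^ 2 * KK x - (N x - S x ^ 2 / (2 * Real.pi))) / Real.sin x
      + Real.sin x * (T x - 2 * (Real.cos x / Real.sin x) * P x + (Real.cos x / Real.sin x) ^ 2 * N x
          - (S' x - Real.cos x / Real.sin x * S x) ^ 2 / (2 * Real.pi))
      + 1 / (2 * Real.pi) * (Real.sin x * (S' x + 2 * F x / Real.sin x) ^ 2)
      + 1 / (2 * Real.pi) * (2 * Real.sin x * (S x - 2 * Real.cos x * F x / Real.sin x ^ 2) ^ 2) := by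
    intro x hx
    have h1 := (hs x hx).ne'
    have h2 : Real.cos x ^ 2 = 1 - Real.sin x ^ 2 := by linarith [Real.sin_sq_add_cos_sq x]
    generalize Real.sin x = s at *
    generalize Real.cos x = c at *
    have h3 : c ^ 3 = c * (1 - s ^ 2) := by rw [← h2]; ring
    field_simp
    ring_nf
    simp only [h2]
    ring
  have p1 : ∀ x ∈ Ioo 0 Real.pi, 0 ≤ (Real.sin x ^ 2 * KK x - (N x - S x ^ 2 / (2 * Real.pi))) / Real.sin x :=
    fun x hx => div_nonneg (by linarith [hW1 x]) (hs x hx).le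
  have p2 : ∀ x ∈ Ioo 0 Real.pi, 0 ≤ Real.sin x * (T x - 2 * (Real.cos x / Real.sin x) * P x + (Real.cos x / Real.sin x) ^ 2 * N x
          - (S' x - Real.cos x / Real.sin x * S x) ^ 2 / (2 * Real.pi)) :=
    fun x hx => mul_nonneg (hs x hx).le (by linarith [(hC x).1])
  have p3 : ∀ x ∈ Ioo 0 Real.pi, 0 ≤ 1 / (2 * Real.pi) * (Real.sin x * (S' x + 2 * F x / Real.sin x) ^ 2) := by
    intro x hx; have := hs x hx; positivity
  have p4 : ∀ x ∈ Ioo 0 Real.pi, 0 ≤ 1 / (2 * Real.pi) * (2 * Real.sin x * (S x - 2 * Real.cos x * F x / Real.sin x ^ 2) ^ 2) := by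
    intro x hx; have := hs x hx; positivity
  have L := auxL hp (fun x => Real.cos x * (N x - S x ^ 2 / (2 * Real.pi)) -
      1 / (2 * Real.pi) * (4 * (S x * F x) - 4 * (Real.cos x * (F x ^ 2 / Real.sin x ^ 2))))
    (fun x => ((-Real.sin x * (N x - S x ^ 2 / (2 * Real.pi)) + Real.cos x * (2 * P x - S x * S' x / Real.pi)) -
        1 / (2 * Real.pi) * (4 * (S' x * F x + S x * (S x * Real.sin x)) -
          4 * (-Real.sin x * (F x ^ 2 / Real.sin x ^ 2) + Real.cos x *
            ((2 * F x * (S x * Real.sin x) * Real.sin x ^ 2 -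
              F x ^ 2 * (2 * Real.sin x * Real.cos x)) / (Real.sin x ^ 2) ^ 2)))))
    (fun x => (T x + KK x - 2 * N x) * Real.sin x) ?_ ?_ cq ?_
  · have L1 := L.1
    simp only [pole 0 hN, pole Real.pi hS, F0, Fpi] at L1
    norm_num at L1
    refine ⟨L1, fun h => ?_⟩
    have hE := L.2 (h.trans (by simp [pole 0 hN, pole Real.pi hS, F0, Fpi]))
    have hp2 : Real.pi / 2 ∈ Ioo 0 Real.pi := ⟨by positivity, by linarith [Real.pi_pos]⟩
    have z1 : ∀ x ∈ Ioo 0 Real.pi, (Real.sin x ^ 2 * KK x - (N x - S x ^ 2 / (2 * Real.pi))) / Real.sin x = 0 := by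
      intro x hx
      have e := hid x hx
      have e' := hE x hx
      beta_reduce at e'
      linarith [p1 x hx, p2 x hx, p3 x hx, p4 x hx]
    have z2 : ∀ x ∈ Ioo 0 Real.pi, Real.sin x * (T x - 2 * (Real.cos x / Real.sin x) * P x + (Real.cos x / Real.sin x) ^ 2 * N x
          - (S' x - Real.cos x / Real.sin x * S x) ^ 2 / (2 * Real.pi)) = 0 := by
      intro x hx
      have e := hid x hx
      have e' := hE x hx
      beta_reduce at e'
      linarith [p1 x hx, p2 x hx, p3 x hx, p4 x hx]
    have z4 : ∀ x ∈ Ioo 0 Real.pi, 1 / (2 * Real.pi) * (2 * Real.sin x * (S x - 2 * Real.cos x * F x / Real.sin x ^ 2) ^ 2) = 0 := by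
      intro x hx
      have e := hid x hx
      have e' := hE x hx
      beta_reduce at e'
      linarith [p1 x hx, p2 x hx, p3 x hx, p4 x hx]
    have y2 : ∀ x ∈ Ioo 0 Real.pi, ∀ t ∈ Icc 0 (2 * Real.pi),
        Gt x t - Real.cos x / Real.sin x * G x t =
          (S' x - Real.cos x / Real.sin x * S x) / (2 * Real.pi) := by
      intro x hx
      apply (hC x).2
      have := (mul_eq_zero.1 (z2 x hx)).resolve_left (hs x hx).ne'
      linarith
    have y4 : ∀ x ∈ Ioo 0 Real.pi, S x = 2 * Real.cos x * F x / Real.sin x ^ 2 := by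
      intro x hx
      have h1 := (mul_eq_zero.1 (z4 x hx)).resolve_left (by positivity)
      have h2 := (mul_eq_zero.1 h1).resolve_left (by have := hs x hx; positivity)
      have := pow_eq_zero_iff (two_ne_zero) |>.1 h2
      linarith
    have c4 := auxConst (f := fun x => F x / Real.sin x ^ 2) (a := 0) (b := Real.pi) (by
      intro x hx
      have hsx := (hs x hx).ne'
      refine ((dF x).div ((Real.hasDerivAt_sin x).pow 2) (pow_ne_zero 2 hsx)).congr_deriv ?_
      have e := y4 x hx
      field_simp at e
      simp only [Pi.pow_apply]
      rw [div_eq_zero_iff]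
      left
      push_cast
      linear_combination Real.sin x * e)
    have hSc : ∀ x ∈ Ioo 0 Real.pi, S x = 2 * F (Real.pi / 2) * Real.cos x := by
      intro x hx
      have e := c4 x hx _ hp2
      simp only [Real.sin_pi_div_two, one_pow, div_one] at e
      rw [y4 x hx, ← e]; ring
    have c2 : ∀ t ∈ Icc 0 (2 * Real.pi), ∀ x ∈ Ioo 0 Real.pi,
        G x t - S x / (2 * Real.pi) = Real.sin x * (G (Real.pi / 2) t - S (Real.pi / 2) / (2 * Real.pi)) := by
      intro t ht x hx
      have c := auxConst (f := fun x => (G x t - S x / (2 * Real.pi)) / Real.sin x) (a := 0) (b := Real.pi) (by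
        intro x hx
        have hsx := (hs x hx).ne'
        refine (((hdt x t).sub ((dS x).div_const (2 * Real.pi))).div (Real.hasDerivAt_sin x) hsx).congr_deriv ?_
        have e := y2 x hx t ht
        simp only [Pi.sub_apply]
        rw [div_eq_zero_iff]
        left
        field_simp at e ⊢
        linear_combination e) x hx _ hp2
      simp only [Real.sin_pi_div_two, div_one] at c
      have hsx := (hs x hx).ne'
      rw [← c]; field_simp
    obtain ⟨α, β, hab⟩ := (hW (Real.pi / 2)).2 (by
      have := (div_eq_zero_iff.1 (z1 _ hp2)).resolve_right (hs _ hp2).ne'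
      simp only [mul_pow]
      rw [intervalIntegral.integral_const_mul]
      linarith)
    have hS2 : S (Real.pi / 2) = 0 := by rw [hSc _ hp2]; simp
    refine ⟨α, β, F (Real.pi / 2) / Real.pi, fun x hx t => ?_⟩
    have hP : Function.Periodic (fun t => G x t - (α * (Real.sin x * Real.cos t) + β * (Real.sin x * Real.sin t) +
        F (Real.pi / 2) / Real.pi * Real.cos x)) (2 * Real.pi) := by
      intro t
      simp only [Real.sin_add_two_pi, Real.cos_add_two_pi]
      rw [hper x t]
    obtain ⟨y, hy, hty⟩ := hP.exists_mem_Ico₀ (by positivity) t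
    suffices G x y - (α * (Real.sin x * Real.cos y) + β * (Real.sin x * Real.sin y) +
        F (Real.pi / 2) / Real.pi * Real.cos x) = 0 by linarith
    have e1 := c2 y ⟨hy.1, hy.2.le⟩ x hx
    have e2 := hab y
    change _ = S (Real.pi / 2) / (2 * Real.pi) + _ + _ at e2
    rw [hS2, hSc x hx, e2, hS2] at e1
    rw [sub_eq_iff_eq_add.1 e1]
    field_simp
    ring
  · intro x hx
    apply ContinuousAt.continuousWithinAt
    refine ContinuousAt.sub (by fun_prop) (continuousAt_const.mul (ContinuousAt.sub (by fun_prop)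
      (continuousAt_const.mul (Real.continuous_cos.continuousAt.mul ?_))))
    rcases eq_or_lt_of_le hx.1 with h | h
    · rw [← h]; exact auxQ2 (by simpa using dF 0) F0 (by simp)
    rcases eq_or_lt_of_le hx.2 with h' | h'
    · rw [h']; exact auxQ2 (by simpa using dF Real.pi) Fpi (by simp)
    · exact (cF.continuousAt.pow 2).div (by fun_prop) (pow_ne_zero 2 (hs x ⟨h,h'⟩).ne')
  · intro x hx
    have hsx := (hs x hx).ne'
    have a1 := (Real.hasDerivAt_cos x).mul ((dN x).sub (((dS x).pow 2).div_const (2 * Real.pi)))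
    have a2 := (Real.hasDerivAt_cos x).mul (((dF x).pow 2).div ((Real.hasDerivAt_sin x).pow 2)
      (pow_ne_zero 2 hsx))
    have a3 := (((dS x).mul (dF x)).const_mul 4).sub (a2.const_mul 4)
    refine (a1.sub (a3.const_mul (1 / (2 * Real.pi)))).congr_deriv ?_
    simp
    field_simp
    ring_nf
    simp
  · intro x hx
    have := hid x hx
    linarith [p1 x hx, p2 x hx, p3 x hx, p4 x hx]

theorem sphL_ne (θ φ : ℝ) : sphL θ φ ≠ 0 := by
  intro h
  have h0 := congrFun h 0
  have h1 := congrFun h 1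
  have h2 := congrFun h 2
  simp [sphL] at h0 h1 h2
  have e1 := Real.sin_sq_add_cos_sq θ
  have e2 := Real.sin_sq_add_cos_sq φ
  have hs : Real.sin θ ≠ 0 := by
    intro h; rw [h, h2] at e1; norm_num at e1
  rw [h0.resolve_left hs, h1.resolve_left hs] at e2
  norm_num at e2

theorem sphL_cont : Continuous (fun p : ℝ × ℝ => sphL p.1 p.2) := by
  refine continuous_pi fun i => ?_
  fin_cases i <;> simp [sphL] <;> fun_prop

def sphT (θ φ : ℝ) : Fin 3 → ℝ :=
  ![Real.cos θ * Real.cos φ, Real.cos θ * Real.sin φ, -Real.sin θ]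

def sphP (φ : ℝ) : Fin 3 → ℝ := ![-Real.sin φ, Real.cos φ, 0]

theorem sphT_cont : Continuous (fun p : ℝ × ℝ => sphT p.1 p.2) := by
  refine continuous_pi fun i => ?_
  fin_cases i <;> simp [sphT] <;> fun_prop

theorem sphP_cont : Continuous (fun p : ℝ × ℝ => sphP p.2) := by
  refine continuous_pi fun i => ?_
  fin_cases i <;> simp [sphP] <;> fun_prop

theorem sphL_dt (θ φ : ℝ) : HasDerivAt (fun t => sphL t φ) (sphT θ φ) θ := by
  rw [hasDerivAt_pi]
  intro i
  fin_cases i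
  · exact (Real.hasDerivAt_sin θ).mul_const _
  · exact (Real.hasDerivAt_sin θ).mul_const _
  · exact Real.hasDerivAt_cos θ

theorem sphL_dp (θ φ : ℝ) : HasDerivAt (fun p => sphL θ p) (Real.sin θ • sphP φ) φ := by
  rw [hasDerivAt_pi]
  intro i
  fin_cases i
  · exact (Real.hasDerivAt_cos φ).const_mul _
  · exact (Real.hasDerivAt_sin φ).const_mul _
  · simpa [sphL, sphP] using hasDerivAt_const φ (Real.cos θ)

theorem auxIoo {f g : ℝ → ℝ} {a b : ℝ} (hab : a ≤ b) (h : ∀ x ∈ Ioo a b, f x = g x) :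
    (∫ x in a..b, f x) = ∫ x in a..b, g x := by
  rw [intervalIntegral.integral_of_le hab, intervalIntegral.integral_of_le hab,
    integral_Ioc_eq_integral_Ioo, integral_Ioc_eq_integral_Ioo]
  exact setIntegral_congr_fun measurableSet_Ioo h

/-- explicit value of the first integral -/
theorem auxM (c a0 a1 a2 : ℝ) : (∫ φ in (0:ℝ)..(2 * Real.pi), ∫ θ in (0:ℝ)..Real.pi,
    (c + (a0 * (Real.sin θ * Real.cos φ) + a1 * (Real.sin θ * Real.sin φ) + a2 * Real.cos θ)) * Real.sin θ)
    = 4 * Real.pi * c := by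
  have h1 : ∀ φ, (∫ θ in (0:ℝ)..Real.pi,
    (c + (a0 * (Real.sin θ * Real.cos φ) + a1 * (Real.sin θ * Real.sin φ) + a2 * Real.cos θ)) * Real.sin θ)
    = 2 * c + Real.pi / 2 * (a0 * Real.cos φ + a1 * Real.sin φ) := by
    intro φ
    have hd : ∀ θ ∈ uIcc (0:ℝ) Real.pi, HasDerivAt (fun θ => -c * Real.cos θ +
      (a0 * Real.cos φ + a1 * Real.sin φ) * ((θ - Real.sin θ * Real.cos θ) / 2) + a2 * (Real.sin θ ^ 2 / 2))
      ((c + (a0 * (Real.sin θ * Real.cos φ) + a1 * (Real.sin θ * Real.sin φ) + a2 * Real.cos θ)) * Real.sin θ) θ := by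
      intro θ _
      have d1 := (Real.hasDerivAt_cos θ).const_mul (-c)
      have d2 := (((hasDerivAt_id θ).sub ((Real.hasDerivAt_sin θ).mul (Real.hasDerivAt_cos θ))).div_const 2).const_mul
        (a0 * Real.cos φ + a1 * Real.sin φ)
      have d3 := (((Real.hasDerivAt_sin θ).pow 2).div_const 2).const_mul a2
      refine ((d1.add d2).add d3).congr_deriv ?_
      have := Real.sin_sq_add_cos_sq θ
      push_cast
      linear_combination (-(a0 * Real.cos φ + a1 * Real.sin φ) / 2) * this
    rw [intervalIntegral.integral_eq_sub_of_hasDerivAt hd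
      (Continuous.intervalIntegrable (by fun_prop) _ _)]
    simp
    ring
  simp_rw [h1]
  have hd : ∀ φ ∈ uIcc (0:ℝ) (2 * Real.pi), HasDerivAt (fun φ => 2 * c * φ +
      Real.pi / 2 * (a0 * Real.sin φ + a1 * -Real.cos φ))
      (2 * c + Real.pi / 2 * (a0 * Real.cos φ + a1 * Real.sin φ)) φ := by
    intro φ _
    have d1 := (hasDerivAt_id φ).const_mul (2 * c)
    have d2 := (((Real.hasDerivAt_sin φ).const_mul a0).add
      (((Real.hasDerivAt_cos φ).neg).const_mul a1)).const_mul (Real.pi / 2)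
    refine (d1.add d2).congr_deriv ?_
    ring
  rw [intervalIntegral.integral_eq_sub_of_hasDerivAt hd
      (Continuous.intervalIntegrable (by fun_prop) _ _)]
  simp
  ring

/-- explicit value of the second integral -/
theorem auxA (c a0 a1 a2 : ℝ) : (∫ φ in (0:ℝ)..(2 * Real.pi), ∫ θ in (0:ℝ)..Real.pi,
    ((c + (a0 * (Real.sin θ * Real.cos φ) + a1 * (Real.sin θ * Real.sin φ) + a2 * Real.cos θ)) ^ 2 -
      1 / 2 * ((a0 * (Real.cos θ * Real.cos φ) + a1 * (Real.cos θ * Real.sin φ) - a2 * Real.sin θ) ^ 2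
      + (-a0 * Real.sin φ + a1 * Real.cos φ) ^ 2)) * Real.sin θ)
    = 4 * Real.pi * c ^ 2 := by
  have h1 : ∀ φ, (∫ θ in (0:ℝ)..Real.pi,
    ((c + (a0 * (Real.sin θ * Real.cos φ) + a1 * (Real.sin θ * Real.sin φ) + a2 * Real.cos θ)) ^ 2 -
      1 / 2 * ((a0 * (Real.cos θ * Real.cos φ) + a1 * (Real.cos θ * Real.sin φ) - a2 * Real.sin θ) ^ 2
      + (-a0 * Real.sin φ + a1 * Real.cos φ) ^ 2)) * Real.sin θ)
    = 2 * c ^ 2 + c * Real.pi * (a0 * Real.cos φ + a1 * Real.sin φ)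
      + (a0 * Real.cos φ + a1 * Real.sin φ) ^ 2 - (-a0 * Real.sin φ + a1 * Real.cos φ) ^ 2 := by
    intro φ
    set L := a0 * Real.cos φ + a1 * Real.sin φ with hL
    set D := -a0 * Real.sin φ + a1 * Real.cos φ with hD
    have hd : ∀ θ ∈ uIcc (0:ℝ) Real.pi, HasDerivAt (fun θ =>
      -(c ^ 2 - D ^ 2 / 2 + L ^ 2 - a2 ^ 2 / 2) * Real.cos θ
      + 2 * c * L * ((θ - Real.sin θ * Real.cos θ) / 2)
      + c * a2 * Real.sin θ ^ 2 + L * a2 * Real.sin θ ^ 3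
      + (3 / 2) * (L ^ 2 - a2 ^ 2) * (Real.cos θ ^ 3 / 3))
      (((c + (a0 * (Real.sin θ * Real.cos φ) + a1 * (Real.sin θ * Real.sin φ) + a2 * Real.cos θ)) ^ 2 -
      1 / 2 * ((a0 * (Real.cos θ * Real.cos φ) + a1 * (Real.cos θ * Real.sin φ) - a2 * Real.sin θ) ^ 2
      + D ^ 2)) * Real.sin θ) θ := by
      intro θ _
      have d1 := (Real.hasDerivAt_cos θ).const_mul (-(c ^ 2 - D ^ 2 / 2 + L ^ 2 - a2 ^ 2 / 2))
      have d2 := (((hasDerivAt_id θ).sub ((Real.hasDerivAt_sin θ).mul (Real.hasDerivAt_cos θ))).div_const 2).const_mul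
        (2 * c * L)
      have d3 := ((Real.hasDerivAt_sin θ).pow 2).const_mul (c * a2)
      have d4 := ((Real.hasDerivAt_sin θ).pow 3).const_mul (L * a2)
      have d5 := (((Real.hasDerivAt_cos θ).pow 3).div_const 3).const_mul ((3 / 2) * (L ^ 2 - a2 ^ 2))
      refine ((((d1.add d2).add d3).add d4).add d5).congr_deriv ?_
      have e := Real.sin_sq_add_cos_sq θ
      have r1 : a0 * (Real.sin θ * Real.cos φ) + a1 * (Real.sin θ * Real.sin φ) = Real.sin θ * L := by
        rw [hL]; ring
      have r2 : a0 * (Real.cos θ * Real.cos φ) + a1 * (Real.cos θ * Real.sin φ) = Real.cos θ * L := by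
        rw [hL]; ring
      rw [r1, r2]
      have e2 : Real.cos θ ^ 2 = 1 - Real.sin θ ^ 2 := by linarith
      push_cast
      norm_num
      ring_nf
      simp only [e2]
      ring
    rw [intervalIntegral.integral_eq_sub_of_hasDerivAt hd
      (Continuous.intervalIntegrable (by fun_prop) _ _)]
    simp
    ring
  simp_rw [h1]
  have hd : ∀ φ ∈ uIcc (0:ℝ) (2 * Real.pi), HasDerivAt (fun φ => 2 * c ^ 2 * φ +
      c * Real.pi * (a0 * Real.sin φ + a1 * -Real.cos φ) +
      ((a0 ^ 2 - a1 ^ 2) * (Real.sin φ * Real.cos φ) + 2 * a0 * a1 * Real.sin φ ^ 2))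
      (2 * c ^ 2 + c * Real.pi * (a0 * Real.cos φ + a1 * Real.sin φ)
      + (a0 * Real.cos φ + a1 * Real.sin φ) ^ 2 - (-a0 * Real.sin φ + a1 * Real.cos φ) ^ 2) φ := by
    intro φ _
    have d1 := (hasDerivAt_id φ).const_mul (2 * c ^ 2)
    have d2 := (((Real.hasDerivAt_sin φ).const_mul a0).add
      (((Real.hasDerivAt_cos φ).neg).const_mul a1)).const_mul (c * Real.pi)
    have d3 := (((Real.hasDerivAt_sin φ).mul (Real.hasDerivAt_cos φ)).const_mul (a0 ^ 2 - a1 ^ 2)).add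
      (((Real.hasDerivAt_sin φ).pow 2).const_mul (2 * a0 * a1))
    refine ((d1.add d2).add d3).congr_deriv ?_
    push_cast
    ring
  rw [intervalIntegral.integral_eq_sub_of_hasDerivAt hd
      (Continuous.intervalIntegrable (by fun_prop) _ _)]
  simp
  ring

/-- Minkowski's inequality via the stutzfunction (Blaschke's proof): with
`M = ∫∫ H sinθ` and `A = ∫∫ (H² − (1/2)((∂_θH)² + (1/sin²θ)(∂_φH)²)) sinθ`,
one has `M² ≥ 4πA` with equality iff `H(θ,φ) = c + a·ℓ(θ,φ)`. -/
theorem stmt8 (H : (Fin 3 → ℝ) → ℝ)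
    (hH : ContDiffOn ℝ (⊤ : ℕ∞) H {v : Fin 3 → ℝ | v ≠ 0})
    (hhom : ∀ v : Fin 3 → ℝ, v ≠ 0 → ∀ t : ℝ, 0 < t → H (t • v) = H v)
    (M A : ℝ)
    (hM : M = ∫ φ in (0:ℝ)..(2 * Real.pi), ∫ θ in (0:ℝ)..Real.pi,
      Hsph H θ φ * Real.sin θ)
    (hA : A = ∫ φ in (0:ℝ)..(2 * Real.pi), ∫ θ in (0:ℝ)..Real.pi,
      (Hsph H θ φ ^ 2 - (1 / 2) * ((deriv (fun t => Hsph H t φ) θ) ^ 2 +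
        (1 / Real.sin θ ^ 2) * (deriv (fun p => Hsph H θ p) φ) ^ 2)) * Real.sin θ) :
    M ^ 2 ≥ 4 * Real.pi * A ∧
    (M ^ 2 = 4 * Real.pi * A ↔ ∃ (c : ℝ) (a : Fin 3 → ℝ),
      ∀ θ ∈ Set.Ioo 0 Real.pi, ∀ φ : ℝ,
        Hsph H θ φ = c + ∑ i, a i * sphL θ φ i) := by
  have hp := Real.pi_pos
  have hs : ∀ x ∈ Ioo 0 Real.pi, 0 < Real.sin x := fun x hx => Real.sin_pos_of_mem_Ioo hx
  have hopen : IsOpen {v : Fin 3 → ℝ | v ≠ 0} := isOpen_ne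
  have hdiff : ∀ θ φ, HasFDerivAt H (fderiv ℝ H (sphL θ φ)) (sphL θ φ) := by
    intro θ φ
    exact ((hH.differentiableOn (by simp)).differentiableAt
      (hopen.mem_nhds (sphL_ne θ φ))).hasFDerivAt
  have hfd : Continuous fun p : ℝ × ℝ => fderiv ℝ H (sphL p.1 p.2) :=
    (hH.continuousOn_fderiv_of_isOpen hopen (by simp)).comp_continuous sphL_cont
      (fun p => sphL_ne p.1 p.2)
  set Gt : ℝ → ℝ → ℝ := fun θ φ => fderiv ℝ H (sphL θ φ) (sphT θ φ) with hGt
  set K : ℝ → ℝ → ℝ := fun θ φ => fderiv ℝ H (sphL θ φ) (sphP φ) with hK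
  have cG : Continuous (Function.uncurry (Hsph H)) :=
    hH.continuousOn.comp_continuous sphL_cont (fun p => sphL_ne p.1 p.2)
  have cGt : Continuous (Function.uncurry Gt) := hfd.clm_apply sphT_cont
  have cK : Continuous (Function.uncurry K) := hfd.clm_apply sphP_cont
  have dt : ∀ θ φ, HasDerivAt (fun t => Hsph H t φ) (Gt θ φ) θ := fun θ φ =>
    (hdiff θ φ).comp_hasDerivAt θ (sphL_dt θ φ)
  have dp : ∀ θ φ, HasDerivAt (fun p => Hsph H θ p) (Real.sin θ * K θ φ) φ := by
    intro θ φ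
    have := (hdiff θ φ).comp_hasDerivAt φ (sphL_dp θ φ)
    rw [map_smul, smul_eq_mul] at this
    exact this
  have hint : ∀ θ φ, (Hsph H θ φ ^ 2 - (1 / 2) * ((deriv (fun t => Hsph H t φ) θ) ^ 2 +
        (1 / Real.sin θ ^ 2) * (deriv (fun p => Hsph H θ p) φ) ^ 2)) * Real.sin θ =
      (Hsph H θ φ ^ 2 - (1 / 2) * (Gt θ φ ^ 2 + K θ φ ^ 2)) * Real.sin θ := by
    intro θ φ
    rw [(dt θ φ).deriv, (dp θ φ).deriv]
    by_cases h : Real.sin θ = 0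
    · simp [h]
    · field_simp
  simp_rw [hint] at hA
  have hM' := hM
  have hA' := hA
  rw [auxSwap (fun φ θ => Hsph H θ φ * Real.sin θ) (by fun_prop)] at hM'
  rw [auxSwap (fun φ θ => (Hsph H θ φ ^ 2 - (1 / 2) * (Gt θ φ ^ 2 + K θ φ ^ 2)) * Real.sin θ)
    (by fun_prop)] at hA'
  simp only [intervalIntegral.integral_mul_const] at hM' hA'
  set m := M / (4 * Real.pi) with hm
  have cSx : Continuous fun θ => ∫ φ in (0:ℝ)..(2 * Real.pi), Hsph H θ φ :=
    intervalIntegral.continuous_parametric_intervalIntegral_of_continuous' cG _ _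
  have cAx : Continuous fun θ => ∫ φ in (0:ℝ)..(2 * Real.pi),
      (Hsph H θ φ ^ 2 - (1 / 2) * (Gt θ φ ^ 2 + K θ φ ^ 2)) :=
    intervalIntegral.continuous_parametric_intervalIntegral_of_continuous' (by fun_prop) _ _
  have i1 : ∀ θ, (∫ φ in (0:ℝ)..(2 * Real.pi), (Hsph H θ φ - m)) =
      (∫ φ in (0:ℝ)..(2 * Real.pi), Hsph H θ φ) - 2 * Real.pi * m := by
    intro θ
    rw [intervalIntegral.integral_sub, intervalIntegral.integral_const]
    · simp
    all_goals apply Continuous.intervalIntegrable; fun_prop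
  have i2 : ∀ θ, (∫ φ in (0:ℝ)..(2 * Real.pi), (Gt θ φ ^ 2 + K θ φ ^ 2 - 2 * (Hsph H θ φ - m) ^ 2)) =
      (-2) * (∫ φ in (0:ℝ)..(2 * Real.pi), (Hsph H θ φ ^ 2 - (1 / 2) * (Gt θ φ ^ 2 + K θ φ ^ 2)))
      + 4 * m * (∫ φ in (0:ℝ)..(2 * Real.pi), Hsph H θ φ) - 2 * Real.pi * (2 * m ^ 2) := by
    intro θ
    have : ∀ φ, Gt θ φ ^ 2 + K θ φ ^ 2 - 2 * (Hsph H θ φ - m) ^ 2 =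
      (-2) * (Hsph H θ φ ^ 2 - (1 / 2) * (Gt θ φ ^ 2 + K θ φ ^ 2)) + 4 * m * Hsph H θ φ - 2 * m ^ 2 := by
      intro φ; ring
    simp_rw [this]
    rw [intervalIntegral.integral_sub, intervalIntegral.integral_add,
      intervalIntegral.integral_const_mul, intervalIntegral.integral_const_mul,
      intervalIntegral.integral_const]
    · simp
    all_goals apply Continuous.intervalIntegrable; fun_prop
  have j1 : (∫ θ in (0:ℝ)..Real.pi, (∫ φ in (0:ℝ)..(2 * Real.pi), (Hsph H θ φ - m)) * Real.sin θ) = 0 := by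
    simp_rw [i1, sub_mul]
    rw [intervalIntegral.integral_sub, intervalIntegral.integral_const_mul, integral_sin, ← hM']
    · simp only [hm, Real.cos_zero, Real.cos_pi]; field_simp; ring
    all_goals apply Continuous.intervalIntegrable; fun_prop
  have j2 : (∫ θ in (0:ℝ)..Real.pi, (∫ φ in (0:ℝ)..(2 * Real.pi),
      (Gt θ φ ^ 2 + K θ φ ^ 2 - 2 * (Hsph H θ φ - m) ^ 2)) * Real.sin θ) =
      (M ^ 2 - 4 * Real.pi * A) / (2 * Real.pi) := by
    simp_rw [i2, sub_mul, add_mul, mul_assoc]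
    rw [intervalIntegral.integral_sub, intervalIntegral.integral_add,
      intervalIntegral.integral_const_mul, intervalIntegral.integral_const_mul,
      intervalIntegral.integral_const_mul, intervalIntegral.integral_const_mul,
      intervalIntegral.integral_const_mul, intervalIntegral.integral_const_mul,
      intervalIntegral.integral_const_mul,
      integral_sin, ← hM', ← hA']
    · simp only [hm, Real.cos_zero, Real.cos_pi]; field_simp; ring
    all_goals apply Continuous.intervalIntegrable; fun_prop
  have TT := auxT (fun θ φ => Hsph H θ φ - m) Gt K (by fun_prop) cGt cK
    (fun θ φ => (dt θ φ).sub_const m) (fun θ φ => (dp θ φ).sub_const m)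
    (fun θ φ => by simp [Hsph, sphL]) (fun φ => by simp [Hsph, sphL])
    (fun φ => by simp [Hsph, sphL]) j1
  rw [j2] at TT
  refine ⟨?_, fun h => ?_, ?_⟩
  · have h1 := TT.1
    rw [le_div_iff₀ (by positivity)] at h1
    linarith
  · obtain ⟨α, β, γ, h1⟩ := TT.2 (by rw [h]; simp)
    refine ⟨m, ![α, β, γ], fun θ hθ φ => ?_⟩
    have := h1 θ hθ φ
    simp [Fin.sum_univ_three, sphL]
    linarith
  · rintro ⟨c, a, h⟩
    replace h : ∀ θ ∈ Ioo 0 Real.pi, ∀ φ, Hsph H θ φ = c + (a 0 * (Real.sin θ * Real.cos φ) +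
        a 1 * (Real.sin θ * Real.sin φ) + a 2 * Real.cos θ) := by
      intro θ hθ φ
      rw [h θ hθ φ, Fin.sum_univ_three]
      rfl
    have hGt' : ∀ θ ∈ Ioo 0 Real.pi, ∀ φ, Gt θ φ = a 0 * (Real.cos θ * Real.cos φ) +
        a 1 * (Real.cos θ * Real.sin φ) - a 2 * Real.sin θ := by
      intro θ hθ φ
      have e : (fun t => Hsph H t φ) =ᶠ[𝓝 θ] fun θ => c + (a 0 * (Real.sin θ * Real.cos φ) +
          a 1 * (Real.sin θ * Real.sin φ) + a 2 * Real.cos θ) := by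
        filter_upwards [Ioo_mem_nhds hθ.1 hθ.2] with t ht using h t ht φ
      have d := (((((Real.hasDerivAt_sin θ).mul_const (Real.cos φ)).const_mul (a 0)).add
        (((Real.hasDerivAt_sin θ).mul_const (Real.sin φ)).const_mul (a 1))).add
        ((Real.hasDerivAt_cos θ).const_mul (a 2))).const_add c
      rw [(dt θ φ).unique (d.congr_of_eventuallyEq e)]
      ring
    have hK' : ∀ θ ∈ Ioo 0 Real.pi, ∀ φ, K θ φ = -a 0 * Real.sin φ + a 1 * Real.cos φ := by
      intro θ hθ φ
      have e : (fun t => Hsph H θ t) = fun φ => c + (a 0 * (Real.sin θ * Real.cos φ) +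
          a 1 * (Real.sin θ * Real.sin φ) + a 2 * Real.cos θ) := funext fun t => h θ hθ t
      have d := (((((Real.hasDerivAt_cos φ).const_mul (Real.sin θ)).const_mul (a 0)).add
        (((Real.hasDerivAt_sin φ).const_mul (Real.sin θ)).const_mul (a 1))).add_const
        (a 2 * Real.cos θ)).const_add c
      have d' := dp θ φ
      rw [e] at d'
      have := d'.unique d
      apply mul_left_cancel₀ (hs θ hθ).ne'
      rw [this]; ring
    have eM : M = 4 * Real.pi * c := by
      rw [hM, ← auxM c (a 0) (a 1) (a 2)]
      refine intervalIntegral.integral_congr fun φ _ => auxIoo hp.le fun θ hθ => ?_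
      simp only [h θ hθ φ]
    have eA : A = 4 * Real.pi * c ^ 2 := by
      rw [hA, ← auxA c (a 0) (a 1) (a 2)]
      refine intervalIntegral.integral_congr fun φ _ => auxIoo hp.le fun θ hθ => ?_
      simp only [h θ hθ φ, hGt' θ hθ φ, hK' θ hθ φ]
    rw [eM, eA]; ring
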